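/- Let E be a finite quiver and i ∈ E^0 a vertex. The following conditions are equivalent: (1) the left P_k(Ē)-module P_k(Ē)p_i is finite-dimensional over k; (2) the left L_k(E)-module L_k(E)p_i is a finite direct sum of simple submodules; (3) L_k(E)p_i has finite length; (4) the subquiver of E consisting of all vertices and arrows lying on paths of E starting at i is acyclic, i.e. no cycle of E can be reached by a path starting at i. -/

import Mathlib

namespace LPA

/-- A finite quiver: finite sets of vertices and arrows with source and target maps. -/
structure FinQuiver : Type 1 where
  V : Type
  A : Type
  [fintypeV : Fintype V]
  [decEqV : DecidableEq V]
  [fintypeA : Fintype A]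
  [decEqA : DecidableEq A]
  src : A → V
  tgt : A → V

attribute [instance] FinQuiver.fintypeV FinQuiver.decEqV FinQuiver.fintypeA FinQuiver.decEqA

/-- The inverse quiver: all arrows reversed. -/
def FinQuiver.rev (Q : FinQuiver) : FinQuiver where
  V := Q.V
  A := Q.A
  fintypeV := Q.fintypeV
  decEqV := Q.decEqV
  fintypeA := Q.fintypeA
  decEqA := Q.decEqA
  src := Q.tgt
  tgt := Q.src

/-- Generators of the path algebra: a trivial path `p v` for each vertex and an arrow `e` for
each arrow. -/
inductive PathGen (Q : FinQuiver) : Type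
  | vertex (v : Q.V) : PathGen Q
  | edge (e : Q.A) : PathGen Q

/-- Defining relations of the path algebra: the trivial paths are pairwise orthogonal
idempotents summing to `1`, and `p (src e) * e = e = e * p (tgt e)`. -/
inductive PathRel (k : Type) [CommRing k] (Q : FinQuiver) :
    FreeAlgebra k (PathGen Q) → FreeAlgebra k (PathGen Q) → Prop
  | vertex_mul_self (v : Q.V) :
      PathRel k Q (FreeAlgebra.ι k (PathGen.vertex v) * FreeAlgebra.ι k (PathGen.vertex v))
        (FreeAlgebra.ι k (PathGen.vertex v))
  | vertex_mul_ne (v w : Q.V) (h : v ≠ w) :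
      PathRel k Q (FreeAlgebra.ι k (PathGen.vertex v) * FreeAlgebra.ι k (PathGen.vertex w)) 0
  | sum_vertex :
      PathRel k Q (∑ v : Q.V, FreeAlgebra.ι k (PathGen.vertex v)) 1
  | src_mul (e : Q.A) :
      PathRel k Q
        (FreeAlgebra.ι k (PathGen.vertex (Q.src e)) * FreeAlgebra.ι k (PathGen.edge e))
        (FreeAlgebra.ι k (PathGen.edge e))
  | mul_tgt (e : Q.A) :
      PathRel k Q
        (FreeAlgebra.ι k (PathGen.edge e) * FreeAlgebra.ι k (PathGen.vertex (Q.tgt e)))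
        (FreeAlgebra.ι k (PathGen.edge e))

/-- The path algebra `P_k(Q)` of a finite quiver `Q`, presented by generators and relations. -/
def PathAlg (k : Type) [CommRing k] (Q : FinQuiver) : Type :=
  RingQuot (PathRel k Q)

variable (k : Type) [CommRing k] (Q : FinQuiver)

noncomputable instance : Ring (PathAlg k Q) :=
  inferInstanceAs (Ring (RingQuot (PathRel k Q)))

noncomputable instance : Algebra k (PathAlg k Q) :=
  inferInstanceAs (Algebra k (RingQuot (PathRel k Q)))

/-- The quotient map from the free algebra onto the path algebra. -/
noncomputable def PathAlg.mk : FreeAlgebra k (PathGen Q) →ₐ[k] PathAlg k Q :=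
  RingQuot.mkAlgHom k (PathRel k Q)

/-- The trivial path (vertex idempotent) `p v` in the path algebra. -/
noncomputable def PathAlg.p (v : Q.V) : PathAlg k Q :=
  PathAlg.mk k Q (FreeAlgebra.ι k (PathGen.vertex v))

/-- The arrow `e` in the path algebra. -/
noncomputable def PathAlg.arrow (e : Q.A) : PathAlg k Q :=
  PathAlg.mk k Q (FreeAlgebra.ι k (PathGen.edge e))

theorem PathAlg.mk_rel {x y : FreeAlgebra k (PathGen Q)} (h : PathRel k Q x y) :
    PathAlg.mk k Q x = PathAlg.mk k Q y :=
  RingQuot.mkAlgHom_rel k h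

theorem PathAlg.p_mul_self (v : Q.V) : PathAlg.p k Q v * PathAlg.p k Q v = PathAlg.p k Q v := by
  have h := PathAlg.mk_rel k Q (PathRel.vertex_mul_self v)
  simpa [map_mul, PathAlg.p] using h

theorem PathAlg.p_mul_ne (v w : Q.V) (hvw : v ≠ w) :
    PathAlg.p k Q v * PathAlg.p k Q w = 0 := by
  have h := PathAlg.mk_rel k Q (PathRel.vertex_mul_ne v w hvw)
  simpa [map_mul, PathAlg.p] using h

theorem PathAlg.sum_p : (∑ v : Q.V, PathAlg.p k Q v) = 1 := by
  have h := PathAlg.mk_rel k Q (PathRel.sum_vertex)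
  simpa [map_sum, PathAlg.p] using h

theorem PathAlg.arrow_mul_tgt (e : Q.A) :
    PathAlg.arrow k Q e * PathAlg.p k Q (Q.tgt e) = PathAlg.arrow k Q e := by
  have h := PathAlg.mk_rel k Q (PathRel.mul_tgt e)
  simpa [map_mul, PathAlg.p, PathAlg.arrow] using h

theorem PathAlg.src_mul_arrow (e : Q.A) :
    PathAlg.p k Q (Q.src e) * PathAlg.arrow k Q e = PathAlg.arrow k Q e := by
  have h := PathAlg.mk_rel k Q (PathRel.src_mul e)
  simpa [map_mul, PathAlg.p, PathAlg.arrow] using h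

/-- The set of vertices `{p v | v ∈ Q.V}` of the path algebra, as a finite set. -/
noncomputable def vertexFinset : Finset (PathAlg k Q) :=
  letI := Classical.decEq (PathAlg k Q)
  Finset.univ.image (PathAlg.p k Q)

end LPA

namespace LPA

/-- Generators of the Leavitt path algebra: vertex idempotents, arrows, and ghost arrows. -/
inductive LGen (Q : FinQuiver) : Type
  | vertex (v : Q.V) : LGen Q
  | edge (e : Q.A) : LGen Q
  | ghost (e : Q.A) : LGen Q

/-- Defining relations of the Leavitt path algebra `L_k(E)`: (V), (E1), (E2), (CK1), (CK2),
together with `∑ p_v = 1`. -/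
inductive LeavittRel (k : Type) [CommRing k] (Q : FinQuiver) :
    FreeAlgebra k (LGen Q) → FreeAlgebra k (LGen Q) → Prop
  | vertex_mul_self (v : Q.V) :
      LeavittRel k Q (FreeAlgebra.ι k (LGen.vertex v) * FreeAlgebra.ι k (LGen.vertex v))
        (FreeAlgebra.ι k (LGen.vertex v))
  | vertex_mul_ne (v w : Q.V) (h : v ≠ w) :
      LeavittRel k Q (FreeAlgebra.ι k (LGen.vertex v) * FreeAlgebra.ι k (LGen.vertex w)) 0
  | sum_vertex :
      LeavittRel k Q (∑ v : Q.V, FreeAlgebra.ι k (LGen.vertex v)) 1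
  | src_mul (e : Q.A) :
      LeavittRel k Q (FreeAlgebra.ι k (LGen.vertex (Q.src e)) * FreeAlgebra.ι k (LGen.edge e))
        (FreeAlgebra.ι k (LGen.edge e))
  | mul_tgt (e : Q.A) :
      LeavittRel k Q (FreeAlgebra.ι k (LGen.edge e) * FreeAlgebra.ι k (LGen.vertex (Q.tgt e)))
        (FreeAlgebra.ι k (LGen.edge e))
  | tgt_mul_ghost (e : Q.A) :
      LeavittRel k Q (FreeAlgebra.ι k (LGen.vertex (Q.tgt e)) * FreeAlgebra.ι k (LGen.ghost e))
        (FreeAlgebra.ι k (LGen.ghost e))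
  | ghost_mul_src (e : Q.A) :
      LeavittRel k Q (FreeAlgebra.ι k (LGen.ghost e) * FreeAlgebra.ι k (LGen.vertex (Q.src e)))
        (FreeAlgebra.ι k (LGen.ghost e))
  | ghost_mul_edge_self (e : Q.A) :
      LeavittRel k Q (FreeAlgebra.ι k (LGen.ghost e) * FreeAlgebra.ι k (LGen.edge e))
        (FreeAlgebra.ι k (LGen.vertex (Q.tgt e)))
  | ghost_mul_edge_ne (e f : Q.A) (h : e ≠ f) :
      LeavittRel k Q (FreeAlgebra.ι k (LGen.ghost e) * FreeAlgebra.ι k (LGen.edge f)) 0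
  | cuntz_krieger (v : Q.V) (h : ∃ e : Q.A, Q.src e = v) :
      LeavittRel k Q
        (∑ e ∈ Finset.univ.filter (fun e : Q.A => Q.src e = v),
          FreeAlgebra.ι k (LGen.edge e) * FreeAlgebra.ι k (LGen.ghost e))
        (FreeAlgebra.ι k (LGen.vertex v))

/-- The Leavitt path algebra `L_k(E)`. -/
def Leavitt (k : Type) [CommRing k] (Q : FinQuiver) : Type :=
  RingQuot (LeavittRel k Q)

variable (k : Type) [CommRing k] (Q : FinQuiver)

noncomputable instance : Ring (Leavitt k Q) :=
  inferInstanceAs (Ring (RingQuot (LeavittRel k Q)))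

noncomputable instance : Algebra k (Leavitt k Q) :=
  inferInstanceAs (Algebra k (RingQuot (LeavittRel k Q)))

/-- The quotient map from the free algebra onto the Leavitt path algebra. -/
noncomputable def Leavitt.mk : FreeAlgebra k (LGen Q) →ₐ[k] Leavitt k Q :=
  RingQuot.mkAlgHom k (LeavittRel k Q)

/-- The vertex idempotent `p v` in the Leavitt path algebra. -/
noncomputable def Leavitt.p (v : Q.V) : Leavitt k Q :=
  Leavitt.mk k Q (FreeAlgebra.ι k (LGen.vertex v))

/-- The arrow `e` in the Leavitt path algebra. -/
noncomputable def Leavitt.ed (e : Q.A) : Leavitt k Q :=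
  Leavitt.mk k Q (FreeAlgebra.ι k (LGen.edge e))

/-- The ghost arrow `ē` in the Leavitt path algebra. -/
noncomputable def Leavitt.gh (e : Q.A) : Leavitt k Q :=
  Leavitt.mk k Q (FreeAlgebra.ι k (LGen.ghost e))

theorem Leavitt.mk_rel {x y : FreeAlgebra k (LGen Q)} (h : LeavittRel k Q x y) :
    Leavitt.mk k Q x = Leavitt.mk k Q y :=
  RingQuot.mkAlgHom_rel k h

theorem Leavitt.p_mul_self (v : Q.V) : Leavitt.p k Q v * Leavitt.p k Q v = Leavitt.p k Q v := by
  have h := Leavitt.mk_rel k Q (LeavittRel.vertex_mul_self v)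
  simpa [map_mul, Leavitt.p] using h

theorem Leavitt.p_mul_ne (v w : Q.V) (hvw : v ≠ w) :
    Leavitt.p k Q v * Leavitt.p k Q w = 0 := by
  have h := Leavitt.mk_rel k Q (LeavittRel.vertex_mul_ne v w hvw)
  simpa [map_mul, Leavitt.p] using h

theorem Leavitt.sum_p : (∑ v : Q.V, Leavitt.p k Q v) = 1 := by
  have h := Leavitt.mk_rel k Q (LeavittRel.sum_vertex)
  simpa [map_sum, Leavitt.p] using h

theorem Leavitt.tgt_mul_gh (e : Q.A) :
    Leavitt.p k Q (Q.tgt e) * Leavitt.gh k Q e = Leavitt.gh k Q e := by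
  have h := Leavitt.mk_rel k Q (LeavittRel.tgt_mul_ghost e)
  simpa [map_mul, Leavitt.p, Leavitt.gh] using h

theorem Leavitt.gh_mul_src (e : Q.A) :
    Leavitt.gh k Q e * Leavitt.p k Q (Q.src e) = Leavitt.gh k Q e := by
  have h := Leavitt.mk_rel k Q (LeavittRel.ghost_mul_src e)
  simpa [map_mul, Leavitt.p, Leavitt.gh] using h

/-- The canonical embedding `P_k(Ē) → L_k(E)` of the path algebra of the inverse quiver into
the Leavitt path algebra, sending `p v ↦ p v` and each reversed arrow `ē ↦ ē`. -/
noncomputable def revToLeavitt : PathAlg k Q.rev →ₐ[k] Leavitt k Q :=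
  RingQuot.liftAlgHom k ⟨((FreeAlgebra.lift k fun g =>
    match g with
    | PathGen.vertex v => Leavitt.p k Q v
    | PathGen.edge e => Leavitt.gh k Q e : FreeAlgebra k (PathGen Q.rev) →ₐ[k] Leavitt k Q)), by
      intro x y h
      induction h with
      | vertex_mul_self v =>
          simp only [map_mul, FreeAlgebra.lift_ι_apply]
          exact Leavitt.p_mul_self k Q v
      | vertex_mul_ne v w h =>
          simp only [map_mul, map_zero, FreeAlgebra.lift_ι_apply]
          exact Leavitt.p_mul_ne k Q v w h
      | sum_vertex =>
          simp only [map_sum, map_one, FreeAlgebra.lift_ι_apply]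
          exact Leavitt.sum_p k Q
      | src_mul e =>
          simp only [map_mul, FreeAlgebra.lift_ι_apply]
          exact Leavitt.tgt_mul_gh k Q e
      | mul_tgt e =>
          simp only [map_mul, FreeAlgebra.lift_ι_apply]
          exact Leavitt.gh_mul_src k Q e⟩

/-- The canonical embedding `P_k(E) → L_k(E)` of the path algebra into the Leavitt path
algebra, sending `p v ↦ p v` and each arrow `e ↦ e`. -/
noncomputable def pathToLeavitt : PathAlg k Q →ₐ[k] Leavitt k Q :=
  RingQuot.liftAlgHom k ⟨((FreeAlgebra.lift k fun g =>
    match g with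
    | PathGen.vertex v => Leavitt.p k Q v
    | PathGen.edge e => Leavitt.ed k Q e : FreeAlgebra k (PathGen Q) →ₐ[k] Leavitt k Q)), by
      intro x y h
      induction h with
      | vertex_mul_self v =>
          simp only [map_mul, FreeAlgebra.lift_ι_apply]
          exact Leavitt.p_mul_self k Q v
      | vertex_mul_ne v w h =>
          simp only [map_mul, map_zero, FreeAlgebra.lift_ι_apply]
          exact Leavitt.p_mul_ne k Q v w h
      | sum_vertex =>
          simp only [map_sum, map_one, FreeAlgebra.lift_ι_apply]
          exact Leavitt.sum_p k Q
      | src_mul e =>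
          simp only [map_mul, FreeAlgebra.lift_ι_apply]
          have h := Leavitt.mk_rel k Q (LeavittRel.src_mul e)
          simpa [map_mul, Leavitt.p, Leavitt.ed] using h
      | mul_tgt e =>
          simp only [map_mul, FreeAlgebra.lift_ι_apply]
          have h := Leavitt.mk_rel k Q (LeavittRel.mul_tgt e)
          simpa [map_mul, Leavitt.p, Leavitt.ed] using h⟩

end LPA

namespace LPA

open TensorProduct

variable (P L : Type) [Ring P] [Ring L] (φ : P →+* L)

/-- The subgroup of relations defining the balanced tensor product `L ⊗_P M` (where `L` is a
right `P`-module via `φ` and `M` a left `P`-module) as a quotient of `L ⊗_ℤ M`. -/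
noncomputable def trel (M : Type) [AddCommGroup M] [Module P M] :
    Submodule L (TensorProduct ℤ L M) :=
  Submodule.span L
    {z | ∃ (l : L) (p : P) (m : M), z = (l * φ p) ⊗ₜ[ℤ] m - l ⊗ₜ[ℤ] (p • m)}

/-- The balanced tensor product `L ⊗_P M`, a left `L`-module. -/
abbrev TensorPhi (M : Type) [AddCommGroup M] [Module P M] : Type :=
  TensorProduct ℤ L M ⧸ trel P L φ M

/-- Functoriality of `L ⊗_P -` : the map induced on balanced tensor products by a `P`-linear
map `f : M → N`. -/
noncomputable def tmap {M N : Type} [AddCommGroup M] [Module P M] [AddCommGroup N]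
    [Module P N] (f : M →ₗ[P] N) : TensorPhi P L φ M →ₗ[L] TensorPhi P L φ N :=
  Submodule.mapQ _ _
    (TensorProduct.AlgebraTensorModule.map (LinearMap.id : L →ₗ[L] L)
      f.toAddMonoidHom.toIntLinearMap)
    (by
      refine Submodule.span_le.mpr ?_
      rintro z ⟨l, p, m, rfl⟩
      simp only [SetLike.mem_coe, Submodule.mem_comap, map_sub,
        TensorProduct.AlgebraTensorModule.map_tmul, LinearMap.id_coe, id_eq,
        AddMonoidHom.coe_toIntLinearMap, LinearMap.toAddMonoidHom_coe]
      exact Submodule.subset_span ⟨l, p, f m, by rw [f.map_smul]⟩)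

/-- `L` is flat as a right `P`-module (via `φ : P → L`): the functor `L ⊗_P -` preserves
injectivity. -/
def RightFlat : Prop :=
  ∀ (M N : Type) [AddCommGroup M] [Module P M] [AddCommGroup N] [Module P N],
    ∀ f : M →ₗ[P] N, Function.Injective f → Function.Injective (tmap P L φ f)

end LPA

namespace LPA

/-- Right multiplication by a fixed element, as an endomorphism of the left regular module. -/
noncomputable def rightMul (R : Type) [Ring R] (x : R) : R →ₗ[R] R where
  toFun y := y * x
  map_add' a b := add_mul a b x
  map_smul' r y := by simp [smul_eq_mul, mul_assoc]

variable (k : Type) [CommRing k] (Q : FinQuiver)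

/-- The principal left ideal `P_k(Ē)·p_v` of the path algebra of the inverse quiver. -/
noncomputable def pIdeal (v : Q.V) : Submodule (PathAlg k Q.rev) (PathAlg k Q.rev) :=
  LinearMap.range (rightMul (PathAlg k Q.rev) (PathAlg.p k Q.rev v))

/-- The principal left ideal `L_k(E)·p_v` of the Leavitt path algebra. -/
noncomputable def pIdealL (v : Q.V) : Submodule (Leavitt k Q) (Leavitt k Q) :=
  LinearMap.range (rightMul (Leavitt k Q) (Leavitt.p k Q v))

/-- A sink: a vertex emitting no arrows. -/
def IsSink (v : Q.V) : Prop := ∀ e : Q.A, Q.src e ≠ v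

/-- For a non-sink vertex `i` (and, degenerately, for a sink, where the domain is trivial),
the left `P_k(Ē)`-module homomorphism
`ν_i : ⊕_{e ∈ s⁻¹(i)} P_k(Ē)·p_{r(e)} → P_k(Ē)·p_i`, `(r_e) ↦ ∑ r_e·ē`. -/
noncomputable def nu (i : Q.V) :
    ((e : {e : Q.A // Q.src e = i}) → ↥(pIdeal k Q (Q.tgt e.1)))
      →ₗ[PathAlg k Q.rev] ↥(pIdeal k Q i) :=
  LinearMap.codRestrict (pIdeal k Q i)
    { toFun := fun x =>
        ∑ e : {e : Q.A // Q.src e = i}, ((x e : PathAlg k Q.rev) * PathAlg.arrow k Q.rev e.1)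
      map_add' := by
        intro a b
        simp [add_mul, Finset.sum_add_distrib]
      map_smul' := by
        intro r x
        simp [smul_eq_mul, Finset.mul_sum, mul_assoc] }
    (by
      intro x
      refine ⟨∑ e : {e : Q.A // Q.src e = i},
        ((x e : PathAlg k Q.rev) * PathAlg.arrow k Q.rev e.1), ?_⟩
      simp only [rightMul, LinearMap.coe_mk, AddHom.coe_mk, Finset.sum_mul]
      refine Finset.sum_congr rfl fun e _ => ?_
      obtain ⟨e, he⟩ := e
      subst he
      rw [mul_assoc]
      congr 1
      exact PathAlg.arrow_mul_tgt k Q.rev e)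

/-- The cokernel of `ν_i`, a finite-dimensional simple `P_k(Ē)`-module. -/
abbrev CokerNu (i : Q.V) : Type :=
  ↥(pIdeal k Q i) ⧸ LinearMap.range (nu k Q i)

/-- Reachability by a (possibly trivial) path in the quiver `E`. -/
inductive Reaches : Q.V → Q.V → Prop
  | refl (v : Q.V) : Reaches v v
  | step (e : Q.A) {w : Q.V} : Reaches (Q.tgt e) w → Reaches (Q.src e) w

end LPA

namespace LPA

/-- A composition series `0 = c 0 < c 1 < … < c ℓ = M` with simple factors. -/
def IsCompSeries {R M : Type} [Ring R] [AddCommGroup M] [Module R M] (ℓ : ℕ)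
    (c : Fin (ℓ + 1) → Submodule R M) : Prop :=
  c 0 = ⊥ ∧ c (Fin.last ℓ) = ⊤ ∧
    ∀ i : Fin ℓ, c i.castSucc < c i.succ ∧
      IsSimpleModule R
        (↥(c i.succ) ⧸ Submodule.comap (c i.succ).subtype (c i.castSucc))

/-- The `i`-th factor `c (i+1) / c i` of a series of submodules. -/
abbrev SeriesFactor {R M : Type} [Ring R] [AddCommGroup M] [Module R M] {ℓ : ℕ}
    (c : Fin (ℓ + 1) → Submodule R M) (i : Fin ℓ) : Type :=
  ↥(c i.succ) ⧸ Submodule.comap (c i.succ).subtype (c i.castSucc)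

end LPA

/-!
If a cycle can be reached from `i`, there is an eventually periodic infinite path `x` starting at
`i`. The Leavitt path algebra acts on the free `A`-module over the infinite paths: ghost arrows
shift, arrows prepend, and each shift is weighted by a unit `u` of the coefficient ring `A`. With
`u = T` and `A = k[T;T⁻¹]`, shifting `x` repeatedly by elements of `P_k(Ē) p_i` produces all the
weights `1, T, T², …`, so `P_k(Ē) p_i` is infinite-dimensional. Moreover, on the submodule generated
by the periodic part of `x`, of period `d`, multiplication by `1 - T ^ d` is an injective
endomorphism that is not surjective, so `L_k(E) p_i` is not Artinian.

If no cycle can be reached from `i`, every property passing from the heads of the arrows leaving a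
vertex to the vertex itself holds at `i`. Finite-dimensionality of `P_k(Ē) p_v` passes on through
`ν_v`, whose cokernel is spanned by the class of `p_v`. Semisimplicity of `L_k(E) p_v` passes on by
(CK2) when `v` is not a sink; when `v` is a sink, removing leading arrows by ghost arrows turns any
nonzero element of `L_k(E) p_v` into a nonzero scalar multiple of `p_v`, so that module is simple or
zero.
-/

namespace LPA

section Algebra

lemma smul_mem_of_forall_ι_smul_mem {k X B M : Type*} [CommSemiring k] [Semiring B]
    [Algebra k B] [AddCommMonoid M] [Module k M] [Module B M] [IsScalarTower k B M]
    {f : FreeAlgebra k X →ₐ[k] B} (hf : Function.Surjective f) {W : Submodule k M}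
    (hW : ∀ x, ∀ m ∈ W, f (FreeAlgebra.ι k x) • m ∈ W) (b : B) {m : M} (hm : m ∈ W) :
    b • m ∈ W := by
  obtain ⟨a, rfl⟩ := hf b
  induction a using FreeAlgebra.induction generalizing m with
  | grade0 c => simpa only [AlgHom.commutes, algebraMap_smul] using W.smul_mem c hm
  | grade1 x => exact hW x m hm
  | mul a b iha ihb => simpa only [map_mul, mul_smul] using iha (ihb hm)
  | add a b iha ihb => simpa only [map_add, add_smul] using W.add_mem (iha hm) (ihb hm)

lemma isArtinian_span_singleton_of_smul_eq {R : Type} {M : Type*} [Ring R] [AddCommGroup M]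
    [Module R M] {p : R} {m : M} (hp : IsArtinian R (LinearMap.range (rightMul R p)))
    (hpm : p • m = m) : IsArtinian R (Submodule.span R {m}) := by
  have hle : Submodule.span R {m} ≤
      (LinearMap.range (rightMul R p)).map (LinearMap.toSpanSingleton R M m) := by
    rw [Submodule.span_singleton_le_iff_mem]
    exact ⟨p, ⟨1, one_mul p⟩, hpm⟩
  have : IsArtinian R ((LinearMap.range (rightMul R p)).map (LinearMap.toSpanSingleton R M m)) :=
    isArtinian_of_surjective _ _ (LinearMap.submoduleMap_surjective _ _)
  exact isArtinian_of_le hle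

variable {R M : Type*} [Ring R] [AddCommGroup M] [Module R M]

lemma exists_smul_eq_of_isArtinian_span_singleton {A : Type*} [Monoid A]
    [DistribMulAction A M] [SMulCommClass A R M] {a : A} {y : M}
    (ha : Function.Injective (a • · : M → M)) (hay : a • y ∈ Submodule.span R {y})
    [IsArtinian R (Submodule.span R {y})] : ∃ z : M, a • z = y := by
  have hmem : ∀ z ∈ Submodule.span R {y},
      DistribSMul.toLinearMap R M a z ∈ Submodule.span R {y} := fun z hz ↦ by
    obtain ⟨r, rfl⟩ := Submodule.mem_span_singleton.mp hz
    rw [map_smul]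
    exact Submodule.smul_mem _ r hay
  have hinj : Function.Injective ((DistribSMul.toLinearMap R M a).restrict hmem) := fun z w h ↦
    Subtype.ext (ha (congrArg Subtype.val h))
  obtain ⟨z, hz⟩ := IsArtinian.surjective_of_injective_endomorphism _ hinj
    ⟨y, Submodule.mem_span_singleton_self y⟩
  exact ⟨z, congrArg Subtype.val hz⟩

variable (R M) in
lemma exists_isInternal_isSimpleModule [IsSemisimpleModule R M] [Module.Finite R M] :
    ∃ (n : ℕ) (f : Fin n → Submodule R M),
      (∀ j, IsSimpleModule R (f j)) ∧ DirectSum.IsInternal f := by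
  obtain ⟨s, hfin, hind, hsup, hsimple⟩ :=
    ((IsSemisimpleModule.finite_tfae (R := R) (M := M)).out 0 4).mp ‹_›
  have : Finite s := hfin
  let enum := (Finite.equivFin s).symm
  refine ⟨Nat.card s, fun j ↦ enum j, fun j ↦ hsimple _ (enum j).2, ?_⟩
  rw [DirectSum.isInternal_submodule_iff_iSupIndep_and_iSup_eq_top]
  refine ⟨((sSupIndep_iff s).mp hind).comp enum.injective, ?_⟩
  rw [← hsup, sSup_eq_iSup']
  exact enum.iSup_comp (g := fun N : s ↦ (N : Submodule R M))

lemma isFiniteLength_of_iSup_eq_top {ι : Type*} [Finite ι] {f : ι → Submodule R M}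
    (hf : ∀ j, IsFiniteLength R (f j)) (htop : ⨆ j, f j = ⊤) : IsFiniteLength R M := by
  simp only [isFiniteLength_iff_isNoetherian_isArtinian, forall_and] at hf ⊢
  obtain ⟨_, _⟩ := hf
  rw [← isNoetherian_top_iff, ← Submodule.topEquiv.isArtinian_iff, ← htop]
  exact ⟨isNoetherian_iSup, isArtinian_iSup⟩

lemma isFiniteLength_of_isSimpleModule [IsSimpleModule R M] : IsFiniteLength R M :=
  isFiniteLength_iff_isNoetherian_isArtinian.mpr ⟨inferInstance, inferInstance⟩

lemma isSemisimpleModule_of_le_iSup {ι : Type*} {N : Submodule R M} {f : ι → Submodule R M}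
    (hf : ∀ j, IsSemisimpleModule R (f j)) (hN : N ≤ ⨆ j, f j) : IsSemisimpleModule R N := by
  have := isSemisimpleModule_biSup_of_isSemisimpleModule_submodule
    (s := Set.univ) fun j _ ↦ hf j
  exact .of_injective _ (Submodule.inclusion_injective (hN.trans_eq iSup_univ.symm))

lemma isSemisimpleModule_of_forall_toSpanSingleton_surjective
    (h : ∀ x : M, x ≠ 0 → Function.Surjective (LinearMap.toSpanSingleton R M x)) :
    IsSemisimpleModule R M := by
  cases subsingleton_or_nontrivial M
  · exact (isSemisimpleModule_iff R M).mpr Subsingleton.instComplementedLattice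
  · have := isSimpleModule_iff_toSpanSingleton_surjective.mpr ⟨‹_›, h⟩
    infer_instance

end Algebra

section Combinatorics

lemma exists_iterate_mem_periodicPts {α : Type*} [Finite α] (f : α → α) (x : α) :
    ∃ a, f^[a] x ∈ Function.periodicPts f := by
  obtain ⟨a, b, hab, heq⟩ :=
    Set.finite_univ.exists_lt_map_eq_of_forall_mem (f := (f^[·] x)) fun _ ↦ Set.mem_univ _
  refine ⟨a, Function.mk_mem_periodicPts (Nat.sub_pos_of_lt hab) ?_⟩
  rw [Function.IsPeriodicPt, Function.IsFixedPt, ← Function.iterate_add_apply,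
    Nat.sub_add_cancel hab.le, heq]

variable {Q : FinQuiver} {v : Q.V}

variable (Q) in
/-- Some cycle of `Q` can be reached from `i`. The cycle is recorded by one of its vertices `v`
and the arrow `e` with which it leaves `v`. -/
def ReachesCycle (i : Q.V) : Prop :=
  ∃ v : Q.V, Reaches Q i v ∧ ∃ e : Q.A, Q.src e = v ∧ Reaches Q (Q.tgt e) v

lemma ReachesCycle.exists_reachesCycle_tgt (h : ReachesCycle Q v) :
    ∃ e, Q.src e = v ∧ ReachesCycle Q (Q.tgt e) := by
  obtain ⟨w, hvw, f, hf, hfw⟩ := h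
  cases hvw with
  | refl => exact ⟨f, hf, v, hfw, f, hf, hfw⟩
  | step e hew => exact ⟨e, rfl, w, hew, f, hf, hfw⟩

/-- An infinite path of `Q`. The infinite paths index a basis of the representations of the
Leavitt path algebra used to detect cycles. -/
@[ext]
structure InfPath (Q : FinQuiver) where
  arrow : ℕ → Q.A
  tgt_arrow : ∀ n, Q.tgt (arrow n) = Q.src (arrow (n + 1))

namespace InfPath

/-- The vertex at which an infinite path starts. -/
def start (x : InfPath Q) : Q.V := Q.src (x.arrow 0)

/-- The infinite path left after removing the first arrow. -/
def tail (x : InfPath Q) : InfPath Q := ⟨fun n ↦ x.arrow (n + 1), fun n ↦ x.tgt_arrow (n + 1)⟩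

/-- The infinite path obtained by prepending an arrow. -/
def cons (e : Q.A) (x : InfPath Q) (h : Q.tgt e = x.start) : InfPath Q where
  arrow n := n.casesOn e x.arrow
  tgt_arrow n := n.casesOn h x.tgt_arrow

lemma cons_tail (x : InfPath Q) : cons (x.arrow 0) x.tail (x.tgt_arrow 0) = x := by
  ext (_ | n) <;> rfl

lemma reaches_start_iterate_tail (x : InfPath Q) (n : ℕ) :
    Reaches Q x.start (tail^[n] x).start := by
  induction n generalizing x with
  | zero => exact .refl _
  | succ n ih => exact .step (x.arrow 0) (x.tgt_arrow 0 ▸ ih x.tail)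

lemma reachesCycle_start {x : InfPath Q} {a : ℕ}
    (h : tail^[a] x ∈ Function.periodicPts tail) : ReachesCycle Q x.start := by
  obtain ⟨d, hd, hper⟩ := h
  set y := tail^[a] x
  refine ⟨y.start, x.reaches_start_iterate_tail a, y.arrow 0, rfl, ?_⟩
  have hloop := y.tail.reaches_start_iterate_tail (d - 1)
  rwa [← Function.iterate_succ_apply, Nat.succ_eq_add_one, Nat.sub_add_cancel hd, hper.eq,
    show y.tail.start = Q.tgt (y.arrow 0) from (y.tgt_arrow 0).symm] at hloop

end InfPath

lemma exists_infPath_of_forall_exists_tgt_mem {S : Set Q.V}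
    (hS : ∀ v ∈ S, ∃ e, Q.src e = v ∧ Q.tgt e ∈ S) (hv : v ∈ S) :
    ∃ x : InfPath Q, x.start = v ∧ ∃ a, InfPath.tail^[a] x ∈ Function.periodicPts InfPath.tail := by
  choose e he htgt using fun s : S ↦ hS s s.2
  let next : S → S := fun s ↦ ⟨Q.tgt (e s), htgt s⟩
  let path : S → InfPath Q := fun s ↦
    { arrow := fun n ↦ e (next^[n] s)
      tgt_arrow := fun n ↦ by rw [he, Function.iterate_succ_apply'] }
  have hsemi : Function.Semiconj path next InfPath.tail := fun s ↦ rfl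
  obtain ⟨a, ha⟩ := exists_iterate_mem_periodicPts next ⟨v, hv⟩
  refine ⟨path ⟨v, hv⟩, he ⟨v, hv⟩, a, ?_⟩
  rw [← (hsemi.iterate_right a).eq]
  exact hsemi.mapsTo_periodicPts ha

lemma ReachesCycle.exists_infPath (h : ReachesCycle Q v) :
    ∃ x : InfPath Q, x.start = v ∧ ∃ a, InfPath.tail^[a] x ∈ Function.periodicPts InfPath.tail :=
  exists_infPath_of_forall_exists_tgt_mem (S := {v | ReachesCycle Q v})
    (fun _ ↦ exists_reachesCycle_tgt) h

lemma induction_of_not_reachesCycle {P : Q.V → Prop}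
    (ih : ∀ v, (∀ e, Q.src e = v → P (Q.tgt e)) → P v) (hv : ¬ ReachesCycle Q v) : P v := by
  by_contra hPv
  have hS : ∀ w ∈ {w | ¬ P w}, ∃ e, Q.src e = w ∧ Q.tgt e ∈ {w | ¬ P w} := fun w hw ↦ by
    simpa using mt (ih w) hw
  obtain ⟨x, rfl, a, ha⟩ := exists_infPath_of_forall_exists_tgt_mem hS hPv
  exact hv (InfPath.reachesCycle_start ha)

end Combinatorics

section Representation

open Finsupp

variable {A : Type} [CommRing A] {Q : FinQuiver}

lemma end_finsupp_ext {ι : Type} {f g : Module.End A (ι →₀ A)}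
    (h : ∀ x, f (single x 1) = g (single x 1)) : f = g :=
  lhom_ext' fun x ↦ LinearMap.ext_ring (h x)

variable (A) in
/-- The action of `p v` on infinite paths: projection onto the paths starting at `v`. -/
noncomputable def vertexOp (v : Q.V) : Module.End A (InfPath Q →₀ A) :=
  linearCombination A fun x ↦ if x.start = v then single x 1 else 0

/-- The action of an arrow `e` on infinite paths: prepend `e` and divide by the unit `u`. -/
noncomputable def edgeOp (u : Aˣ) (e : Q.A) : Module.End A (InfPath Q →₀ A) :=
  linearCombination A fun x ↦ if h : Q.tgt e = x.start then single (x.cons e h) ↑u⁻¹ else 0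

/-- The action of a ghost arrow `ē` on infinite paths: remove a leading `e` and multiply by the
unit `u`. -/
noncomputable def ghostOp (u : Aˣ) (e : Q.A) : Module.End A (InfPath Q →₀ A) :=
  linearCombination A fun x ↦ if x.arrow 0 = e then single x.tail ↑u else 0

variable (u : Aˣ)

lemma vertexOp_single (v : Q.V) (x : InfPath Q) (a : A) :
    vertexOp A v (single x a) = if x.start = v then single x a else 0 := by
  simp [vertexOp]

lemma edgeOp_single (e : Q.A) (x : InfPath Q) (a : A) :
    edgeOp u e (single x a) =
      if h : Q.tgt e = x.start then single (x.cons e h) (a * ↑u⁻¹) else 0 := by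
  simp only [edgeOp, linearCombination_single, smul_dite, smul_single, smul_eq_mul, smul_zero]

lemma ghostOp_single (e : Q.A) (x : InfPath Q) (a : A) :
    ghostOp u e (single x a) = if x.arrow 0 = e then single x.tail (a * u) else 0 := by
  simp [ghostOp]

lemma vertexOp_mul_vertexOp (v w : Q.V) :
    vertexOp A v * vertexOp A w = if v = w then vertexOp A v else 0 := by
  refine end_finsupp_ext fun x ↦ ?_
  rw [Module.End.mul_apply, vertexOp_single]
  split_ifs <;> simp_all [vertexOp_single, eq_comm]

lemma sum_vertexOp : ∑ v : Q.V, vertexOp A v = 1 :=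
  end_finsupp_ext fun x ↦ by simp [vertexOp_single]

lemma vertexOp_src_mul_edgeOp (e : Q.A) : vertexOp A (Q.src e) * edgeOp u e = edgeOp u e := by
  refine end_finsupp_ext fun x ↦ ?_
  rw [Module.End.mul_apply, edgeOp_single]
  split_ifs
  · exact (vertexOp_single ..).trans (if_pos rfl)
  · exact map_zero _

lemma edgeOp_mul_vertexOp_tgt (e : Q.A) : edgeOp u e * vertexOp A (Q.tgt e) = edgeOp u e := by
  refine end_finsupp_ext fun x ↦ ?_
  rw [Module.End.mul_apply, vertexOp_single]
  split_ifs with h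
  · rfl
  · rw [map_zero, edgeOp_single, dif_neg (Ne.symm h)]

lemma vertexOp_tgt_mul_ghostOp (e : Q.A) : vertexOp A (Q.tgt e) * ghostOp u e = ghostOp u e := by
  refine end_finsupp_ext fun x ↦ ?_
  rw [Module.End.mul_apply, ghostOp_single]
  split_ifs with h
  · exact (vertexOp_single ..).trans (if_pos (h ▸ (x.tgt_arrow 0).symm))
  · exact map_zero _

lemma ghostOp_mul_vertexOp_src (e : Q.A) : ghostOp u e * vertexOp A (Q.src e) = ghostOp u e := by
  refine end_finsupp_ext fun x ↦ ?_
  rw [Module.End.mul_apply, vertexOp_single]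
  split_ifs with h
  · rfl
  · rw [map_zero, ghostOp_single, if_neg fun hx ↦ h (congrArg Q.src hx)]

lemma ghostOp_mul_edgeOp (e f : Q.A) :
    ghostOp u e * edgeOp u f = if e = f then vertexOp A (Q.tgt e) else 0 := by
  refine end_finsupp_ext fun x ↦ ?_
  rw [Module.End.mul_apply, edgeOp_single]
  by_cases hx : Q.tgt f = x.start
  · rw [dif_pos hx, ghostOp_single, show (x.cons f hx).arrow 0 = f from rfl,
      show (x.cons f hx).tail = x from rfl]
    rcases eq_or_ne f e with rfl | h
    · rw [if_pos rfl, if_pos rfl, vertexOp_single, if_pos hx.symm, mul_assoc, Units.inv_mul,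
        mul_one]
    · rw [if_neg h, if_neg h.symm, LinearMap.zero_apply]
  · rw [dif_neg hx, map_zero]
    split_ifs with h
    · rw [vertexOp_single, if_neg (h ▸ Ne.symm hx)]
    · rfl

lemma edgeOp_mul_ghostOp_single (e : Q.A) (x : InfPath Q) :
    (edgeOp u e * ghostOp u e) (single x 1) = if x.arrow 0 = e then single x 1 else 0 := by
  rw [Module.End.mul_apply, ghostOp_single]
  split_ifs with h
  · subst h
    rw [edgeOp_single, dif_pos (show _ = x.tail.start from x.tgt_arrow 0), x.cons_tail, one_mul,
      Units.mul_inv]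
  · exact map_zero _

lemma sum_edgeOp_mul_ghostOp (v : Q.V) :
    ∑ e with Q.src e = v, edgeOp u e * ghostOp u e = vertexOp A v := by
  refine end_finsupp_ext fun x ↦ ?_
  simp only [LinearMap.sum_apply, edgeOp_mul_ghostOp_single, vertexOp_single, Finset.sum_ite_eq,
    Finset.mem_filter_univ]
  rfl

variable (k : Type) [CommRing k] [Algebra k A]

/-- Chen's representation of the Leavitt path algebra on infinite paths, twisted by a unit `u`:
each removed arrow contributes a factor `u` and each prepended arrow a factor `u⁻¹`. -/
noncomputable def chenRep : Leavitt k Q →ₐ[k] Module.End A (InfPath Q →₀ A) :=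
  RingQuot.liftAlgHom k ⟨FreeAlgebra.lift k fun
    | .vertex v => vertexOp A v
    | .edge e => edgeOp u e
    | .ghost e => ghostOp u e, fun x y h ↦ by
    induction h <;> simp only [map_mul, map_sum, map_zero, map_one, FreeAlgebra.lift_ι_apply]
    case vertex_mul_self v => rw [vertexOp_mul_vertexOp, if_pos rfl]
    case vertex_mul_ne v w h => rw [vertexOp_mul_vertexOp, if_neg h]
    case sum_vertex => exact sum_vertexOp
    case src_mul e => exact vertexOp_src_mul_edgeOp u e
    case mul_tgt e => exact edgeOp_mul_vertexOp_tgt u e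
    case tgt_mul_ghost e => exact vertexOp_tgt_mul_ghostOp u e
    case ghost_mul_src e => exact ghostOp_mul_vertexOp_src u e
    case ghost_mul_edge_self e => rw [ghostOp_mul_edgeOp, if_pos rfl]
    case ghost_mul_edge_ne e f h => rw [ghostOp_mul_edgeOp, if_neg h]
    case cuntz_krieger v _ => exact sum_edgeOp_mul_ghostOp u v⟩

lemma chenRep_p (v : Q.V) : chenRep u k (Leavitt.p k Q v) = vertexOp A v :=
  (RingQuot.liftAlgHom_mkAlgHom_apply ..).trans (FreeAlgebra.lift_ι_apply ..)

lemma chenRep_gh (e : Q.A) : chenRep u k (Leavitt.gh k Q e) = ghostOp u e :=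
  (RingQuot.liftAlgHom_mkAlgHom_apply ..).trans (FreeAlgebra.lift_ι_apply ..)

variable (Q) in
lemma revToLeavitt_p (v : Q.V) :
    revToLeavitt k Q (PathAlg.p k Q.rev v) = Leavitt.p k Q v :=
  (RingQuot.liftAlgHom_mkAlgHom_apply ..).trans (FreeAlgebra.lift_ι_apply ..)

variable (Q) in
lemma revToLeavitt_arrow (e : Q.A) :
    revToLeavitt k Q (PathAlg.arrow k Q.rev e) = Leavitt.gh k Q e :=
  (RingQuot.liftAlgHom_mkAlgHom_apply ..).trans (FreeAlgebra.lift_ι_apply ..)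

lemma exists_mem_pIdeal_chenRep_single (x : InfPath Q) (n : ℕ) :
    ∃ b ∈ pIdeal k Q x.start, ∀ r : A, chenRep u k (revToLeavitt k Q b) (single x r) =
      single (InfPath.tail^[n] x) (r * u ^ n) := by
  induction n generalizing x with
  | zero =>
    refine ⟨PathAlg.p k Q.rev x.start, ⟨1, one_mul _⟩, fun r ↦ ?_⟩
    rw [revToLeavitt_p, chenRep_p, vertexOp_single, if_pos rfl, pow_zero, mul_one]
    rfl
  | succ n ih =>
    obtain ⟨b, -, hb⟩ := ih x.tail
    refine ⟨b * PathAlg.arrow k Q.rev (x.arrow 0), ⟨b * PathAlg.arrow k Q.rev (x.arrow 0), ?_⟩,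
      fun r ↦ ?_⟩
    · exact (mul_assoc _ _ _).trans (congrArg (b * ·) (PathAlg.arrow_mul_tgt k Q.rev _))
    · rw [map_mul, revToLeavitt_arrow, map_mul, chenRep_gh, Module.End.mul_apply,
        ghostOp_single, if_pos rfl, hb, mul_assoc, ← pow_succ', Function.iterate_succ_apply]

end Representation

section Cycles

open Finsupp

variable {k A : Type} [CommRing k] [CommRing A] [Algebra k A] {Q : FinQuiver} {u : Aˣ}

lemma linearIndependent_pow_of_transcendental {a : A} (ha : Transcendental k a) :
    LinearIndependent k (a ^ · : ℕ → A) := by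
  have h := (Polynomial.basisMonomials k).linearIndependent.map' (Polynomial.aeval a).toLinearMap
    (LinearMap.ker_eq_bot.mpr (transcendental_iff_injective.mp ha))
  simpa [Function.comp_def, Polynomial.aeval_monomial] using h

theorem not_finite_pIdeal [Nontrivial k] (hu : Transcendental k (u : A)) (x : InfPath Q) :
    ¬ Module.Finite k (pIdeal k Q x.start) := by
  intro hfin
  choose b hb hbx using exists_mem_pIdeal_chenRep_single u k x
  let ψ : pIdeal k Q x.start →ₗ[k] A :=
    { toFun b := linearCombination A (fun _ ↦ 1) (chenRep u k (revToLeavitt k Q b) (single x 1))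
      map_add' := by simp
      map_smul' := by simp }
  have hψ : ψ ∘ (fun n ↦ ⟨b n, hb n⟩) = (u ^ · : ℕ → A) := funext fun n ↦ by simp [ψ, hbx]
  exact Module.Finite.not_linearIndependent_of_infinite _
    (.of_comp ψ (hψ ▸ linearIndependent_pow_of_transcendental hu))

/-- The space of infinite paths as a module over the Leavitt path algebra through `chenRep`. -/
noncomputable abbrev chenModule (u : Aˣ) : Module (Leavitt k Q) (InfPath Q →₀ A) :=
  Module.compHom _ (chenRep u k : Leavitt k Q →ₐ[k] _).toRingHom

theorem not_isArtinian_pIdealL {d : ℕ} (hreg : IsSMulRegular A (1 - (u : A) ^ d))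
    (hunit : ¬ IsUnit (1 - (u : A) ^ d)) {x : InfPath Q} {a : ℕ}
    (hper : Function.IsPeriodicPt InfPath.tail d (InfPath.tail^[a] x)) :
    ¬ IsArtinian (Leavitt k Q) (pIdealL k Q x.start) := by
  intro hart
  let := chenModule (k := k) (Q := Q) u
  have : SMulCommClass A (Leavitt k Q) (InfPath Q →₀ A) :=
    ⟨fun a l m ↦ (map_smul (chenRep u k l) a m).symm⟩
  have hpx : Leavitt.p k Q x.start • single x (1 : A) = single x 1 :=
    (congrArg (· (single x 1)) (chenRep_p u k x.start)).trans
      ((vertexOp_single ..).trans (if_pos rfl))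
  obtain ⟨b, -, hb⟩ := exists_mem_pIdeal_chenRep_single u k x a
  obtain ⟨c, -, hc⟩ := exists_mem_pIdeal_chenRep_single u k (InfPath.tail^[a] x) d
  set m : InfPath Q →₀ A := single (InfPath.tail^[a] x) (u ^ a)
  have hbx : revToLeavitt k Q b • single x (1 : A) = m := (hb 1).trans (by rw [one_mul])
  have hcm : revToLeavitt k Q c • m = (u : A) ^ d • m :=
    (hc _).trans (by rw [hper.eq, smul_single, smul_eq_mul, mul_comm])
  have : IsArtinian (Leavitt k Q) (Submodule.span (Leavitt k Q) {m}) := by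
    have := isArtinian_span_singleton_of_smul_eq hart hpx
    exact isArtinian_of_le (t := Submodule.span (Leavitt k Q) {single x (1 : A)})
      ((Submodule.span_singleton_le_iff_mem ..).mpr (Submodule.mem_span_singleton.mpr ⟨_, hbx⟩))
  have hmem : (1 - (u : A) ^ d) • m ∈ Submodule.span (Leavitt k Q) {m} :=
    Submodule.mem_span_singleton.mpr ⟨1 - revToLeavitt k Q c, by
      rw [sub_smul, sub_smul, hcm, one_smul, one_smul]⟩
  obtain ⟨z, hz⟩ := exists_smul_eq_of_isArtinian_span_singleton hreg.finsupp hmem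
  have haug := congrArg (linearCombination A fun _ ↦ (1 : A)) hz
  rw [map_smul, linearCombination_single, smul_eq_mul, smul_eq_mul, mul_one] at haug
  exact hunit (isUnit_of_mul_isUnit_left (haug ▸ u.isUnit.pow a))

end Cycles

section LaurentPolynomial

open LaurentPolynomial

variable {k : Type} [CommRing k]

lemma transcendental_T_one : Transcendental k (T 1 : k[T;T⁻¹]) := by
  have : Polynomial.aeval (T 1 : k[T;T⁻¹]) = Polynomial.toLaurentAlg := by ext; simp
  exact transcendental_iff_injective.mpr (this ▸ Polynomial.toLaurent_injective)

lemma one_sub_T_ne_zero [Nontrivial k] {n : ℤ} (hn : n ≠ 0) : (1 - T n : k[T;T⁻¹]) ≠ 0 := by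
  rw [sub_ne_zero, ← T_zero]
  intro h
  have hdeg := congrArg degree h
  rw [degree_T, degree_T] at hdeg
  exact hn (by exact_mod_cast hdeg.symm)

lemma not_isUnit_one_sub_T [Nontrivial k] (n : ℤ) : ¬ IsUnit (1 - T n : k[T;T⁻¹]) := fun h ↦ by
  simpa using h.map (eval₂ (RingHom.id k) 1)

variable {Q : FinQuiver} {v : Q.V}

theorem not_reachesCycle_of_finite_pIdeal [Nontrivial k] (h : Module.Finite k (pIdeal k Q v)) :
    ¬ ReachesCycle Q v := fun hv ↦ by
  obtain ⟨x, rfl, -⟩ := hv.exists_infPath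
  let t : k[T;T⁻¹]ˣ := (isUnit_T 1).unit
  exact not_finite_pIdeal (u := t) transcendental_T_one x h

theorem not_reachesCycle_of_isArtinian_pIdealL [IsDomain k]
    (h : IsArtinian (Leavitt k Q) (pIdealL k Q v)) : ¬ ReachesCycle Q v := fun hv ↦ by
  obtain ⟨x, rfl, a, d, hd, hper⟩ := hv.exists_infPath
  let t : k[T;T⁻¹]ˣ := (isUnit_T 1).unit
  have ht : (t : k[T;T⁻¹]) ^ d = T d := by simp [t, T_pow]
  refine not_isArtinian_pIdealL (u := t) ?_ ?_ hper h
  · rw [ht]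
    exact (IsRegular.of_ne_zero (one_sub_T_ne_zero (by exact_mod_cast hd.ne'))).left.isSMulRegular
  · rw [ht]
    exact not_isUnit_one_sub_T _

end LaurentPolynomial

section FiniteDimension

variable {k : Type} [CommRing k] {Q : FinQuiver} {v : Q.V}

variable (k Q) in
lemma PathAlg.mk_surjective : Function.Surjective (PathAlg.mk k Q) :=
  RingQuot.mkAlgHom_surjective k _

variable (k v) in
/-- The trivial path `p v` as a generator of the left ideal `P_k(Ē) p v`. -/
noncomputable def vertexGen : pIdeal k Q v := ⟨PathAlg.p k Q.rev v, 1, one_mul _⟩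

lemma coe_smul_vertexGen (y : pIdeal k Q v) : (y : PathAlg k Q.rev) • vertexGen k v = y := by
  obtain ⟨_, b, rfl⟩ := y
  exact Subtype.ext ((mul_assoc ..).trans (congrArg (b * ·) (PathAlg.p_mul_self ..)))

lemma p_smul_vertexGen (w : Q.V) :
    PathAlg.p k Q.rev w • vertexGen k v = if w = v then vertexGen k v else 0 := by
  refine Subtype.ext ?_
  split_ifs with h
  · subst h
    exact PathAlg.p_mul_self ..
  · exact PathAlg.p_mul_ne _ _ _ _ h

lemma arrow_smul_vertexGen_mem_range_nu (e : Q.A) :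
    PathAlg.arrow k Q.rev e • vertexGen k v ∈ LinearMap.range (nu k Q v) := by
  by_cases he : Q.src e = v
  · refine ⟨Pi.single ⟨e, he⟩ (vertexGen k (Q.tgt e)), Subtype.ext ?_⟩
    subst he
    refine (Finset.sum_eq_single ⟨e, rfl⟩ (fun f _ hf ↦ ?_) (by simp)).trans ?_
    · rw [Pi.single_eq_of_ne hf]
      exact zero_mul _
    · rw [Pi.single_eq_same]
      exact (PathAlg.src_mul_arrow k Q.rev e).trans (PathAlg.arrow_mul_tgt k Q.rev e).symm
  · have hzero : PathAlg.arrow k Q.rev e * PathAlg.p k Q.rev v = 0 := by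
      rw [← PathAlg.arrow_mul_tgt k Q.rev e, mul_assoc]
      exact (congrArg _ (PathAlg.p_mul_ne k Q.rev _ _ he)).trans (mul_zero _)
    rw [show PathAlg.arrow k Q.rev e • vertexGen k v = 0 from Subtype.ext hzero]
    exact zero_mem _

variable (k v) in
lemma finite_cokerNu : Module.Finite k (CokerNu k Q v) := by
  let c : CokerNu k Q v := Submodule.Quotient.mk (vertexGen k v)
  have hstable : ∀ g, ∀ m ∈ Submodule.span k {c},
      PathAlg.mk k Q.rev (FreeAlgebra.ι k g) • m ∈ Submodule.span k {c} := fun g m hm ↦ by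
    obtain ⟨r, rfl⟩ := Submodule.mem_span_singleton.mp hm
    rw [smul_comm]
    refine Submodule.smul_mem _ r ?_
    rw [← Submodule.Quotient.mk_smul]
    cases g with
    | vertex w =>
      rw [show PathAlg.mk k Q.rev (.ι k (.vertex w)) • vertexGen k v = _ from
        p_smul_vertexGen (Q := Q) w]
      split_ifs
      · exact Submodule.mem_span_singleton_self c
      · exact zero_mem _
    | edge e =>
      rw [show Submodule.Quotient.mk (PathAlg.mk k Q.rev (.ι k (.edge e)) • vertexGen k v) = 0 from
        (Submodule.Quotient.mk_eq_zero _).mpr (arrow_smul_vertexGen_mem_range_nu (Q := Q) e)]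
      exact zero_mem _
  refine ⟨⟨{c}, eq_top_iff.mpr fun y _ ↦ ?_⟩⟩
  obtain ⟨y, rfl⟩ := Submodule.Quotient.mk_surjective _ y
  rw [← coe_smul_vertexGen y, Submodule.Quotient.mk_smul, Finset.coe_singleton]
  exact smul_mem_of_forall_ι_smul_mem (PathAlg.mk_surjective k Q.rev) hstable _
    (Submodule.mem_span_singleton_self c)

theorem finite_pIdeal_of_not_reachesCycle (hv : ¬ ReachesCycle Q v) :
    Module.Finite k (pIdeal k Q v) := by
  refine induction_of_not_reachesCycle (P := fun v ↦ Module.Finite k (pIdeal k Q v))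
    (fun v ih ↦ ?_) hv
  have (e : {e // Q.src e = v}) : Module.Finite k (pIdeal k Q (Q.tgt e)) := ih e e.2
  have := finite_cokerNu k v
  let N := (LinearMap.range (nu k Q v)).restrictScalars k
  have : Module.Finite k N :=
    inferInstanceAs (Module.Finite k (LinearMap.range ((nu k Q v).restrictScalars k)))
  have : Module.Finite k (pIdeal k Q v ⧸ N) :=
    .equiv (Submodule.Quotient.restrictScalarsEquiv k _).symm
  exact .of_submodule_quotient N

end FiniteDimension

section Leavitt

variable (k : Type) [CommRing k] (Q : FinQuiver)

lemma Leavitt.mk_surjective : Function.Surjective (Leavitt.mk k Q) :=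
  RingQuot.mkAlgHom_surjective k _

lemma Leavitt.src_mul_ed (e : Q.A) :
    Leavitt.p k Q (Q.src e) * Leavitt.ed k Q e = Leavitt.ed k Q e := by
  simpa only [map_mul, Leavitt.p, Leavitt.ed] using Leavitt.mk_rel k Q (.src_mul e)

lemma Leavitt.ed_mul_tgt (e : Q.A) :
    Leavitt.ed k Q e * Leavitt.p k Q (Q.tgt e) = Leavitt.ed k Q e := by
  simpa only [map_mul, Leavitt.p, Leavitt.ed] using Leavitt.mk_rel k Q (.mul_tgt e)

lemma Leavitt.gh_mul_ed (e f : Q.A) :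
    Leavitt.gh k Q e * Leavitt.ed k Q f = if e = f then Leavitt.p k Q (Q.tgt e) else 0 := by
  split_ifs with h
  · subst h
    simpa only [map_mul, Leavitt.p, Leavitt.ed, Leavitt.gh] using
      Leavitt.mk_rel k Q (.ghost_mul_edge_self e)
  · simpa only [map_mul, map_zero, Leavitt.ed, Leavitt.gh] using
      Leavitt.mk_rel k Q (.ghost_mul_edge_ne e f h)

variable {Q} in
lemma Leavitt.sum_ed_mul_gh {v : Q.V} (hv : ¬ IsSink Q v) :
    ∑ e with Q.src e = v, Leavitt.ed k Q e * Leavitt.gh k Q e = Leavitt.p k Q v := by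
  simp only [IsSink, not_forall, not_not] at hv
  simpa only [map_sum, map_mul, Leavitt.p, Leavitt.ed, Leavitt.gh] using
    Leavitt.mk_rel k Q (.cuntz_krieger v hv)

lemma Leavitt.p_mul_ed (v : Q.V) (e : Q.A) :
    Leavitt.p k Q v * Leavitt.ed k Q e = if Q.src e = v then Leavitt.ed k Q e else 0 := by
  split_ifs with h
  · rw [← h, Leavitt.src_mul_ed]
  · rw [← Leavitt.src_mul_ed, ← mul_assoc, Leavitt.p_mul_ne k Q _ _ (Ne.symm h), zero_mul]

lemma Leavitt.gh_mul_p (v : Q.V) (e : Q.A) :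
    Leavitt.gh k Q e * Leavitt.p k Q v = if Q.src e = v then Leavitt.gh k Q e else 0 := by
  split_ifs with h
  · rw [← h, Leavitt.gh_mul_src]
  · rw [← Leavitt.gh_mul_src, mul_assoc, Leavitt.p_mul_ne k Q _ _ h, mul_zero]

/-- The element `1 - ∑ e ē`, which by (CK2) is the sum of the `p v` over the sinks `v`. -/
noncomputable def sinkProj : Leavitt k Q := 1 - ∑ e, Leavitt.ed k Q e * Leavitt.gh k Q e

lemma sinkProj_mul_ed (e : Q.A) : sinkProj k Q * Leavitt.ed k Q e = 0 := by
  simp [sinkProj, sub_mul, Finset.sum_mul, mul_assoc, Leavitt.gh_mul_ed, Leavitt.ed_mul_tgt]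

lemma sinkProj_mul_p (v : Q.V) :
    sinkProj k Q * Leavitt.p k Q v = Leavitt.p k Q v * sinkProj k Q := by
  simp [sinkProj, sub_mul, mul_sub, Finset.sum_mul, Finset.mul_sum, mul_assoc, Leavitt.gh_mul_p,
    ← mul_assoc (Leavitt.p k Q v), Leavitt.p_mul_ed]

variable {k Q}

instance (v : Q.V) : Module.Finite (Leavitt k Q) (pIdealL k Q v) := .range _

lemma pIdealL_le_iSup_map_gh {v : Q.V} (hv : ¬ IsSink Q v) :
    pIdealL k Q v ≤ ⨆ e : {e // Q.src e = v},
      (pIdealL k Q (Q.tgt e)).map (rightMul _ (Leavitt.gh k Q e)) := by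
  rintro _ ⟨l, rfl⟩
  change l * Leavitt.p k Q v ∈ _
  rw [← Leavitt.sum_ed_mul_gh k hv, Finset.mul_sum]
  refine Submodule.sum_mem _ fun e he ↦ Submodule.mem_iSup_of_mem ⟨e, by simpa using he⟩ ?_
  refine ⟨l * Leavitt.ed k Q e, ⟨l * Leavitt.ed k Q e, ?_⟩, mul_assoc ..⟩
  exact (mul_assoc ..).trans (congrArg (l * ·) (Leavitt.ed_mul_tgt k Q e))

lemma p_mul_mem_span_p {v w : Q.V} {x : Leavitt k Q}
    (hx : x ∈ Submodule.span k {Leavitt.p k Q w}) :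
    Leavitt.p k Q v * x ∈ Submodule.span k {Leavitt.p k Q w} := by
  obtain ⟨r, rfl⟩ := Submodule.mem_span_singleton.mp hx
  rw [mul_smul_comm]
  refine Submodule.smul_mem _ r ?_
  rcases eq_or_ne v w with rfl | h
  · rw [Leavitt.p_mul_self]
    exact Submodule.mem_span_singleton_self _
  · rw [Leavitt.p_mul_ne k Q v w h]
    exact zero_mem _

variable (k) in
/-- The filtration of `L_k(E) p w`, for a sink `w`, whose `n`-th step is spanned by the paths of
length less than `n` ending at `w`. It is defined through the ghost arrows, which lower the length,
so that no normal form of the elements of `L_k(E) p w` is needed. -/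
noncomputable def sinkFiltration (w : Q.V) : ℕ → Submodule k (Leavitt k Q)
  | 0 => ⊥
  | n + 1 => (Submodule.span k {Leavitt.p k Q w}).comap (LinearMap.mulLeft k (sinkProj k Q)) ⊓
      ⨅ e, (sinkFiltration w n).comap (LinearMap.mulLeft k (Leavitt.gh k Q e))

variable {w : Q.V} {n : ℕ} {x : Leavitt k Q}

lemma mem_sinkFiltration_succ : x ∈ sinkFiltration k w (n + 1) ↔
    sinkProj k Q * x ∈ Submodule.span k {Leavitt.p k Q w} ∧
      ∀ e, Leavitt.gh k Q e * x ∈ sinkFiltration k w n := by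
  simp [sinkFiltration]

lemma sinkFiltration_mono : Monotone (sinkFiltration k w) := by
  refine monotone_nat_of_le_succ fun n ↦ ?_
  induction n with
  | zero => exact bot_le
  | succ n ih =>
    intro x hx
    rw [mem_sinkFiltration_succ] at hx ⊢
    exact ⟨hx.1, fun e ↦ ih (hx.2 e)⟩

lemma gh_mul_mem_sinkFiltration (e : Q.A) (hx : x ∈ sinkFiltration k w n) :
    Leavitt.gh k Q e * x ∈ sinkFiltration k w n :=
  (mem_sinkFiltration_succ.mp (sinkFiltration_mono n.le_succ hx)).2 e

lemma p_mul_mem_sinkFiltration (v : Q.V) (hx : x ∈ sinkFiltration k w n) :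
    Leavitt.p k Q v * x ∈ sinkFiltration k w n := by
  cases n with
  | zero => rw [(Submodule.mem_bot k).mp hx, mul_zero]; exact zero_mem _
  | succ n =>
    rw [mem_sinkFiltration_succ] at hx ⊢
    refine ⟨?_, fun e ↦ ?_⟩
    · rw [← mul_assoc, sinkProj_mul_p, mul_assoc]
      exact p_mul_mem_span_p hx.1
    · rw [← mul_assoc, Leavitt.gh_mul_p]
      split_ifs
      · exact hx.2 e
      · rw [zero_mul]
        exact zero_mem _

lemma ed_mul_mem_sinkFiltration_succ (e : Q.A) (hx : x ∈ sinkFiltration k w n) :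
    Leavitt.ed k Q e * x ∈ sinkFiltration k w (n + 1) := by
  rw [mem_sinkFiltration_succ]
  refine ⟨?_, fun f ↦ ?_⟩
  · rw [← mul_assoc, sinkProj_mul_ed, zero_mul]
    exact zero_mem _
  · rw [← mul_assoc, Leavitt.gh_mul_ed]
    split_ifs
    · exact p_mul_mem_sinkFiltration _ hx
    · rw [zero_mul]
      exact zero_mem _

lemma p_mem_sinkFiltration_one (hw : IsSink Q w) : Leavitt.p k Q w ∈ sinkFiltration k w 1 := by
  rw [mem_sinkFiltration_succ]
  refine ⟨?_, fun e ↦ ?_⟩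
  · rw [sinkProj, sub_mul, one_mul, Finset.sum_mul]
    simp [mul_assoc, Leavitt.gh_mul_p, if_neg (hw _), Submodule.mem_span_singleton_self]
  · rw [Leavitt.gh_mul_p, if_neg (hw e)]
    exact zero_mem _

lemma exists_mem_sinkFiltration_of_mem_pIdealL (hw : IsSink Q w) (hx : x ∈ pIdealL k Q w) :
    ∃ n, x ∈ sinkFiltration k w n := by
  have hmem {y} : y ∈ ⨆ n, sinkFiltration k w n ↔ ∃ n, y ∈ sinkFiltration k w n :=
    Submodule.mem_iSup_of_directed _ sinkFiltration_mono.directed_le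
  obtain ⟨b, rfl⟩ := hx
  refine hmem.mp (smul_mem_of_forall_ι_smul_mem (Leavitt.mk_surjective k Q) (fun g y hy ↦ ?_) b
    (hmem.mpr ⟨1, p_mem_sinkFiltration_one hw⟩))
  obtain ⟨n, hn⟩ := hmem.mp hy
  rw [hmem]
  cases g with
  | vertex v => exact ⟨n, p_mul_mem_sinkFiltration v hn⟩
  | edge e => exact ⟨n + 1, ed_mul_mem_sinkFiltration_succ e hn⟩
  | ghost e => exact ⟨n, gh_mul_mem_sinkFiltration e hn⟩

end Leavitt

section Semisimple

variable {k : Type} [Field k] {Q : FinQuiver} {v w : Q.V}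

lemma exists_mul_eq_p_of_mem_sinkFiltration {n : ℕ} {x : Leavitt k Q}
    (hx : x ∈ sinkFiltration k w n) (hx0 : x ≠ 0) : ∃ y, y * x = Leavitt.p k Q w := by
  induction n generalizing x with
  | zero => exact absurd hx hx0
  | succ n ih =>
    rw [mem_sinkFiltration_succ] at hx
    by_cases hgh : ∃ e, Leavitt.gh k Q e * x ≠ 0
    · obtain ⟨e, he⟩ := hgh
      obtain ⟨y, hy⟩ := ih (hx.2 e) he
      exact ⟨y * Leavitt.gh k Q e, (mul_assoc ..).trans hy⟩
    · push Not at hgh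
      have hproj : sinkProj k Q * x = x := by
        simp [sinkProj, sub_mul, Finset.sum_mul, mul_assoc, hgh]
      obtain ⟨c, hc⟩ := Submodule.mem_span_singleton.mp (hproj ▸ hx.1)
      have hc0 : c ≠ 0 := by
        rintro rfl
        exact hx0 (by rw [← hc, zero_smul])
      exact ⟨algebraMap k _ c⁻¹, by rw [← hc, ← Algebra.smul_def, inv_smul_smul₀ hc0]⟩

lemma isSemisimpleModule_pIdealL_of_isSink (hw : IsSink Q w) :
    IsSemisimpleModule (Leavitt k Q) (pIdealL k Q w) := by
  refine isSemisimpleModule_of_forall_toSpanSingleton_surjective ?_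
  rintro ⟨x, hx⟩ hx0 ⟨_, z, rfl⟩
  obtain ⟨n, hn⟩ := exists_mem_sinkFiltration_of_mem_pIdealL hw hx
  obtain ⟨y, hy⟩ := exists_mul_eq_p_of_mem_sinkFiltration hn (Subtype.coe_ne_coe.mpr hx0)
  exact ⟨z * y, Subtype.ext ((mul_assoc ..).trans (congrArg (z * ·) hy))⟩

theorem isSemisimpleModule_pIdealL_of_not_reachesCycle (hv : ¬ ReachesCycle Q v) :
    IsSemisimpleModule (Leavitt k Q) (pIdealL k Q v) := by
  refine induction_of_not_reachesCycle
    (P := fun v ↦ IsSemisimpleModule (Leavitt k Q) (pIdealL k Q v)) (fun v ih ↦ ?_) hv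
  by_cases hs : IsSink Q v
  · exact isSemisimpleModule_pIdealL_of_isSink hs
  · refine isSemisimpleModule_of_le_iSup (fun e ↦ ?_) (pIdealL_le_iSup_map_gh hs)
    have := ih e e.2
    exact .of_surjective _ ((rightMul _ (Leavitt.gh k Q e)).submoduleMap_surjective _)

end Semisimple

end LPA

open LPA in
/-- For a vertex `i` of a finite quiver `E`, the following are equivalent:
(1) `P_k(Ē)·p_i` is finite-dimensional over `k`;
(2) `L_k(E)·p_i` is a finite direct sum of simple submodules;
(3) `L_k(E)·p_i` has finite length;
(4) no cycle of `E` can be reached by a path starting at `i`. -/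
theorem statement_15 (k : Type) [Field k] (Q : FinQuiver) (i : Q.V) :
    [FiniteDimensional k ↥(Submodule.restrictScalars k (pIdeal k Q i)),
     ∃ (n : ℕ) (f : Fin n → Submodule (Leavitt k Q) ↥(pIdealL k Q i)),
       (∀ j, IsSimpleModule (Leavitt k Q) ↥(f j)) ∧ DirectSum.IsInternal f,
     IsFiniteLength (Leavitt k Q) ↥(pIdealL k Q i),
     ¬ ∃ v : Q.V, Reaches Q i v ∧ ∃ e : Q.A, Q.src e = v ∧ Reaches Q (Q.tgt e) v].TFAE := by
  tfae_have 1 → 4 := not_reachesCycle_of_finite_pIdeal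
  tfae_have 4 → 1 := finite_pIdeal_of_not_reachesCycle
  tfae_have 4 → 2 := fun h ↦ by
    have := isSemisimpleModule_pIdealL_of_not_reachesCycle (k := k) h
    exact exists_isInternal_isSimpleModule ..
  tfae_have 2 → 3 := fun ⟨_, _, hsimple, hint⟩ ↦
    isFiniteLength_of_iSup_eq_top (fun _ ↦ isFiniteLength_of_isSimpleModule)
      hint.submodule_iSup_eq_top
  tfae_have 3 → 4 := fun h ↦
    not_reachesCycle_of_isArtinian_pIdealL (isFiniteLength_iff_isNoetherian_isArtinian.mp h).2
  tfae_finish
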